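/- Let û ∈ Λ₂, let D ⊂ Ω be a measurable set of positive Lebesgue measure, let χ_D be its characteristic function, and let d ∈ (0, 1/2) be such that û_1(x), û_2(x) ∈ (d, 1−d) for a.e. x ∈ D. For s ∈ (−d, d) define u^s by u^s_1 = û_1 + s·χ_D, u^s_2 = û_2 − s·χ_D, and u^s_i = û_i for i ≥ 3; then u^s ∈ Λ₂. The function s ↦ E(u^s) is a quadratic polynomial in s whose second derivative is the constant −4 μ √(π/τ) ∫_Ω χ_D (G_τ * χ_D) dx, which is strictly negative; in particular s ↦ E(u^s) is strictly concave on (−d, d), so û is not a minimizer of E over Λ₂. -/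

import Mathlib

/-!
Write `c = (1, -1, 0, …, 0)`, so that `uˢᵢ = ûᵢ + s cᵢ χ_D`, and let
`B(f, g) = ∫_Ω f (G_τ * g)`. The kernel is bounded and continuous, so `G_τ * g` is bounded and
measurable for integrable `g`, and `B` is bilinear on integrable functions
(`pairing_add_smul`). Expanding the energy gives a quadratic polynomial in `s` whose leading
coefficient is `μ √(π/τ) B(χ_D, χ_D) ∑ᵢ ∑_{j ≠ i} cᵢ cⱼ`, and the double sum equals
`(∑ᵢ cᵢ)² - ∑ᵢ cᵢ² = -2` (`sum_exchangeCoeff`). Since `G_τ > 0` pointwise and `D` has positive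
measure, `B(χ_D, χ_D) > 0` (`pairing_indicator_pos`), without using that the form is positive
definite. A quadratic with negative leading coefficient is strictly concave, and the mean of its
values at `± d/2` lies strictly below its value at `0`, which is `E(û)`.
-/

open MeasureTheory Real

noncomputable section

/-- The two-dimensional Gaussian (heat) kernel `G_τ(x) = (4πτ)⁻¹ exp(-|x|²/(4τ))`. -/
def gauss (τ : ℝ) (x : EuclideanSpace ℝ (Fin 2)) : ℝ :=
  (4 * π * τ)⁻¹ * Real.exp (-‖x‖ ^ 2 / (4 * τ))

/-- Convolution on `ℝ²`: `(k * v)(x) = ∫ k(x - y) v(y) dy`. -/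
def gconv (k v : EuclideanSpace ℝ (Fin 2) → ℝ) (x : EuclideanSpace ℝ (Fin 2)) : ℝ :=
  ∫ y, k (x - y) * v y

/-- Membership in `Λ₁`: measurable functions `u = (u₁, …, uₙ)`, extended by zero
outside `Ω`, with `uᵢ(x) ∈ {0,1}` and `∑ᵢ uᵢ(x) = 1` for a.e. `x ∈ Ω`. -/
def InLambda1 {n : ℕ} (Ω : Set (EuclideanSpace ℝ (Fin 2)))
    (u : Fin n → EuclideanSpace ℝ (Fin 2) → ℝ) : Prop :=
  (∀ i, Measurable (u i)) ∧ (∀ i, ∀ x, x ∉ Ω → u i x = 0) ∧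
  (∀ᵐ x ∂(volume.restrict Ω), (∀ i, u i x = 0 ∨ u i x = 1) ∧ (∑ i, u i x) = 1)

/-- Membership in `Λ₂` (the convex relaxation of `Λ₁`): measurable functions,
extended by zero outside `Ω`, with `uᵢ(x) ∈ [0,1]` and `∑ᵢ uᵢ(x) = 1` a.e. on `Ω`. -/
def InLambda2 {n : ℕ} (Ω : Set (EuclideanSpace ℝ (Fin 2)))
    (u : Fin n → EuclideanSpace ℝ (Fin 2) → ℝ) : Prop :=
  (∀ i, Measurable (u i)) ∧ (∀ i, ∀ x, x ∉ Ω → u i x = 0) ∧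
  (∀ᵐ x ∂(volume.restrict Ω), (∀ i, u i x ∈ Set.Icc (0 : ℝ) 1) ∧ (∑ i, u i x) = 1)

/-- The ICTM segmentation energy
`E(u) = ∑ᵢ λᵢ ∫_Ω uᵢ eᵢ + μ √(π/τ) ∑ᵢ ∑_{j≠i} ∫_Ω uᵢ (G_τ * uⱼ)`. -/
def ictmEnergy {n : ℕ} (Ω : Set (EuclideanSpace ℝ (Fin 2))) (τ μ : ℝ)
    (lam : Fin n → ℝ) (e u : Fin n → EuclideanSpace ℝ (Fin 2) → ℝ) : ℝ :=
  (∑ i, lam i * ∫ x in Ω, u i x * e i x) +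
    μ * Real.sqrt (π / τ) *
      ∑ i, ∑ j ∈ Finset.univ.erase i, ∫ x in Ω, u i x * gconv (gauss τ) (u j) x

lemma gauss_pos {τ : ℝ} (hτ : 0 < τ) (x : EuclideanSpace ℝ (Fin 2)) : 0 < gauss τ x := by
  unfold gauss
  have := Real.pi_pos
  positivity

lemma gauss_le {τ : ℝ} (hτ : 0 < τ) (x : EuclideanSpace ℝ (Fin 2)) :
    gauss τ x ≤ (4 * π * τ)⁻¹ := by
  unfold gauss
  have := Real.pi_pos
  have h1 : Real.exp (-‖x‖ ^ 2 / (4 * τ)) ≤ 1 := by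
    rw [Real.exp_le_one_iff, neg_div]
    have : 0 ≤ ‖x‖ ^ 2 / (4 * τ) := by positivity
    linarith
  exact mul_le_of_le_one_right (by positivity) h1

lemma norm_gauss_le {τ : ℝ} (hτ : 0 < τ) (x : EuclideanSpace ℝ (Fin 2)) :
    ‖gauss τ x‖ ≤ (4 * π * τ)⁻¹ := by
  rw [Real.norm_of_nonneg (gauss_pos hτ x).le]
  exact gauss_le hτ x

lemma continuous_gauss (τ : ℝ) : Continuous (gauss τ) := by
  unfold gauss
  fun_prop

lemma integrable_gauss_mul {τ : ℝ} (hτ : 0 < τ) {v : EuclideanSpace ℝ (Fin 2) → ℝ}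
    (hv : Integrable v) (x : EuclideanSpace ℝ (Fin 2)) :
    Integrable (fun y => gauss τ (x - y) * v y) := by
  refine hv.bdd_mul (c := (4 * π * τ)⁻¹) ?_ (ae_of_all _ fun y => norm_gauss_le hτ _)
  exact ((continuous_gauss τ).comp (continuous_const.sub continuous_id)).aestronglyMeasurable

lemma norm_gconv_le {τ : ℝ} (hτ : 0 < τ) {v : EuclideanSpace ℝ (Fin 2) → ℝ}
    (hv : Integrable v) (x : EuclideanSpace ℝ (Fin 2)) :
    ‖gconv (gauss τ) v x‖ ≤ ∫ y, (4 * π * τ)⁻¹ * ‖v y‖ := by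
  unfold gconv
  refine norm_integral_le_of_norm_le (hv.norm.const_mul _) (ae_of_all _ fun y => ?_)
  rw [norm_mul]
  exact mul_le_mul_of_nonneg_right (norm_gauss_le hτ _) (norm_nonneg _)

lemma stronglyMeasurable_gconv (τ : ℝ) {v : EuclideanSpace ℝ (Fin 2) → ℝ}
    (hv : Measurable v) : StronglyMeasurable (gconv (gauss τ) v) := by
  unfold gconv
  refine StronglyMeasurable.integral_prod_right ?_
  refine Measurable.stronglyMeasurable ?_
  exact ((continuous_gauss τ).measurable.comp (measurable_fst.sub measurable_snd)).mul
    (hv.comp measurable_snd)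

lemma integrable_mul_gconv {τ : ℝ} (hτ : 0 < τ) {f v : EuclideanSpace ℝ (Fin 2) → ℝ}
    (hf : Integrable f) (hv : Integrable v) (hvm : Measurable v) :
    Integrable (fun x => f x * gconv (gauss τ) v x) :=
  hf.mul_bdd (stronglyMeasurable_gconv τ hvm).aestronglyMeasurable
    (ae_of_all _ fun x => norm_gconv_le hτ hv x)

lemma gconv_add_smul {τ : ℝ} (hτ : 0 < τ) {v w : EuclideanSpace ℝ (Fin 2) → ℝ}
    (hv : Integrable v) (hw : Integrable w) (t : ℝ) (x : EuclideanSpace ℝ (Fin 2)) :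
    gconv (gauss τ) (fun y => v y + t * w y) x =
      gconv (gauss τ) v x + t * gconv (gauss τ) w x := by
  unfold gconv
  rw [← integral_const_mul, ← integral_add (integrable_gauss_mul hτ hv x)
    ((integrable_gauss_mul hτ hw x).const_mul t)]
  congr 1
  funext y
  ring

/-- Bilinear expansion of the pairing `(f, g) ↦ ∫_Ω f (G_τ * g)` along a common direction `h`. -/
lemma pairing_add_smul {τ : ℝ} (hτ : 0 < τ) (Ω : Set (EuclideanSpace ℝ (Fin 2)))
    {f g h : EuclideanSpace ℝ (Fin 2) → ℝ}
    (hf : Integrable f) (hg : Integrable g) (hh : Integrable h)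
    (hgm : Measurable g) (hhm : Measurable h) (s t : ℝ) :
    ∫ x in Ω, (f x + s * h x) * gconv (gauss τ) (fun y => g y + t * h y) x =
      (∫ x in Ω, f x * gconv (gauss τ) g x) + t * (∫ x in Ω, f x * gconv (gauss τ) h x) +
        s * (∫ x in Ω, h x * gconv (gauss τ) g x) +
        s * t * ∫ x in Ω, h x * gconv (gauss τ) h x := by
  have I1 := (integrable_mul_gconv hτ hf hg hgm).restrict (s := Ω)
  have I2 := ((integrable_mul_gconv hτ hf hh hhm).restrict (s := Ω)).const_mul t
  have I3 := ((integrable_mul_gconv hτ hh hg hgm).restrict (s := Ω)).const_mul s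
  have I4 := ((integrable_mul_gconv hτ hh hh hhm).restrict (s := Ω)).const_mul (s * t)
  have I12 : Integrable (fun x => f x * gconv (gauss τ) g x + t * (f x * gconv (gauss τ) h x))
      (volume.restrict Ω) := I1.add I2
  have I123 : Integrable (fun x => f x * gconv (gauss τ) g x + t * (f x * gconv (gauss τ) h x) +
      s * (h x * gconv (gauss τ) g x)) (volume.restrict Ω) := I12.add I3
  rw [← integral_const_mul, ← integral_const_mul, ← integral_const_mul,
    ← integral_add I1 I2, ← integral_add I12 I3, ← integral_add I123 I4]
  congr 1
  funext x
  rw [gconv_add_smul hτ hg hh]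
  ring

lemma gconv_indicator_pos {τ : ℝ} (hτ : 0 < τ) {D : Set (EuclideanSpace ℝ (Fin 2))}
    (hχ : Integrable (D.indicator (1 : EuclideanSpace ℝ (Fin 2) → ℝ)))
    (hDpos : 0 < volume D) (x : EuclideanSpace ℝ (Fin 2)) :
    0 < gconv (gauss τ) (D.indicator 1) x := by
  unfold gconv
  rw [integral_pos_iff_support_of_nonneg _ (integrable_gauss_mul hτ hχ x)]
  · refine hDpos.trans_le (measure_mono fun y hy => ?_)
    simp [hy, (gauss_pos hτ (x - y)).ne']
  · intro y
    exact mul_nonneg (gauss_pos hτ _).le (Set.indicator_nonneg (by simp) y)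

lemma pairing_indicator_pos {τ : ℝ} (hτ : 0 < τ) {Ω D : Set (EuclideanSpace ℝ (Fin 2))}
    (hχ : Integrable (D.indicator (1 : EuclideanSpace ℝ (Fin 2) → ℝ)))
    (hDm : MeasurableSet D) (hDΩ : D ⊆ Ω) (hDpos : 0 < volume D) :
    0 < ∫ x in Ω, D.indicator 1 x * gconv (gauss τ) (D.indicator 1) x := by
  have hχm : Measurable (D.indicator (1 : EuclideanSpace ℝ (Fin 2) → ℝ)) :=
    measurable_one.indicator hDm
  rw [setIntegral_pos_iff_support_of_nonneg_ae _
    (integrable_mul_gconv hτ hχ hχ hχm).integrableOn]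
  · refine hDpos.trans_le (measure_mono fun y hy => ⟨?_, hDΩ hy⟩)
    simp [hy, (gconv_indicator_pos hτ hχ hDpos y).ne']
  · exact ae_of_all _ fun y => mul_nonneg (Set.indicator_nonneg (by simp) y)
      (gconv_indicator_pos hτ hχ hDpos y).le

/-- The exchange direction `e_{i0} - e_{i1}`, as a coefficient vector. -/
def exchangeCoeff {n : ℕ} (i0 i1 i : Fin n) : ℝ :=
  (if i = i0 then 1 else 0) - (if i = i1 then 1 else 0)

/-- The off-diagonal sum is `(∑ c)² - ∑ c² = 0 - 2`. -/
lemma sum_exchangeCoeff {n : ℕ} {i0 i1 : Fin n} (h : i0 ≠ i1) :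
    ∑ i, ∑ j ∈ Finset.univ.erase i, exchangeCoeff i0 i1 i * exchangeCoeff i0 i1 j = -2 := by
  have h0 : ∑ j, exchangeCoeff i0 i1 j = 0 := by simp [exchangeCoeff]
  have h2 : ∀ i, exchangeCoeff i0 i1 i * exchangeCoeff i0 i1 i =
      (if i = i0 then 1 else 0) + (if i = i1 then 1 else 0) := by
    intro i
    unfold exchangeCoeff
    split_ifs with ha hb
    · exact absurd (ha.symm.trans hb) h
    all_goals norm_num
  simp_rw [← Finset.mul_sum, Finset.sum_erase_eq_sub (Finset.mem_univ _), h0, zero_sub, mul_neg,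
    h2, Finset.sum_neg_distrib, Finset.sum_add_distrib]
  simp
  norm_num

lemma InLambda2.integrable {n : ℕ} {Ω : Set (EuclideanSpace ℝ (Fin 2))}
    {u : Fin n → EuclideanSpace ℝ (Fin 2) → ℝ} (hΩfin : volume Ω ≠ ⊤)
    (hu : InLambda2 Ω u) (i : Fin n) : Integrable (u i) := by
  have h1 : IntegrableOn (u i) Ω := by
    refine IntegrableOn.of_bound hΩfin.lt_top (hu.1 i).aestronglyMeasurable 1 ?_
    filter_upwards [hu.2.2] with x hx
    rw [Real.norm_of_nonneg (hx.1 i).1]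
    exact (hx.1 i).2
  exact (integrableOn_iff_integrable_of_support_subset
    fun x hx => by_contra fun hxΩ => hx (hu.2.1 i x hxΩ)).1 h1

/-- The energy along a line `u + s c χ`, is a quadratic polynomial in `s` with the
stated constant and leading coefficients. -/
lemma ictmEnergy_expand {n : ℕ} {Ω : Set (EuclideanSpace ℝ (Fin 2))} {τ μ : ℝ} (hτ : 0 < τ)
    (lam c : Fin n → ℝ) (e u : Fin n → EuclideanSpace ℝ (Fin 2) → ℝ)
    (χ : EuclideanSpace ℝ (Fin 2) → ℝ)
    (hu : ∀ i, Integrable (u i)) (hum : ∀ i, Measurable (u i))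
    (hχ : Integrable χ) (hχm : Measurable χ)
    (hue : ∀ i, IntegrableOn (fun x => u i x * e i x) Ω)
    (hχe : ∀ i, IntegrableOn (fun x => χ x * e i x) Ω) :
    ∃ b : ℝ, ∀ s : ℝ, ictmEnergy Ω τ μ lam e (fun i x => u i x + s * c i * χ x) =
      ictmEnergy Ω τ μ lam e u + b * s +
      (μ * Real.sqrt (π / τ) * ((∑ i, ∑ j ∈ Finset.univ.erase i, c i * c j) *
        ∫ x in Ω, χ x * gconv (gauss τ) χ x)) * s ^ 2 := by
  refine ⟨(∑ i, lam i * (c i * ∫ x in Ω, χ x * e i x)) + μ * Real.sqrt (π / τ) *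
    ∑ i, ∑ j ∈ Finset.univ.erase i, (c j * (∫ x in Ω, u i x * gconv (gauss τ) χ x) +
      c i * ∫ x in Ω, χ x * gconv (gauss τ) (u j) x), fun s => ?_⟩
  have hlin : ∀ i, ∫ x in Ω, (u i x + s * c i * χ x) * e i x =
      (∫ x in Ω, u i x * e i x) + s * c i * ∫ x in Ω, χ x * e i x := by
    intro i
    rw [← integral_const_mul, ← integral_add (hue i) ((hχe i).const_mul _)]
    congr 1
    funext x
    ring
  unfold ictmEnergy
  simp_rw [hlin, fun i j => pairing_add_smul hτ Ω (hu i) (hu j) hχ (hum j) hχm (s * c i) (s * c j)]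
  have e1 : ∀ i, lam i * ((∫ x in Ω, u i x * e i x) + s * c i * ∫ x in Ω, χ x * e i x) =
      lam i * (∫ x in Ω, u i x * e i x) + lam i * (c i * ∫ x in Ω, χ x * e i x) * s := by
    intro i
    ring
  have e2 : ∀ i j, (∫ x in Ω, u i x * gconv (gauss τ) (u j) x) +
        s * c j * (∫ x in Ω, u i x * gconv (gauss τ) χ x) +
        s * c i * (∫ x in Ω, χ x * gconv (gauss τ) (u j) x) +
        s * c i * (s * c j) * (∫ x in Ω, χ x * gconv (gauss τ) χ x) =
      (∫ x in Ω, u i x * gconv (gauss τ) (u j) x) +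
        (c j * (∫ x in Ω, u i x * gconv (gauss τ) χ x) +
          c i * ∫ x in Ω, χ x * gconv (gauss τ) (u j) x) * s +
        c i * c j * ((∫ x in Ω, χ x * gconv (gauss τ) χ x) * s ^ 2) := by
    intro i j
    ring
  simp_rw [e1, e2]
  simp only [Finset.sum_add_distrib, ← Finset.sum_mul]
  ring

lemma strictConcaveOn_quadratic {S : Set ℝ} (hS : Convex ℝ S) (a b : ℝ) {k : ℝ} (hk : k < 0) :
    StrictConcaveOn ℝ S (fun s => a + b * s + k * s ^ 2) := by
  refine ⟨hS, fun x _ y _ hxy p q hp hq hpq => ?_⟩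
  have h1 : 0 < (x - y) ^ 2 := by
    have := sub_ne_zero.2 hxy
    positivity
  have h2 : 0 < -k * (p * q * (x - y) ^ 2) := mul_pos (neg_pos.2 hk) (by positivity)
  obtain rfl : q = 1 - p := by linarith
  simp only [smul_eq_mul]
  -- The gap between the two sides is exactly `-k p q (x - y)²`.
  nlinarith

/-- Exchange perturbations of size less than `d` stay admissible. -/
lemma inLambda2_exchange {n : ℕ} {Ω D : Set (EuclideanSpace ℝ (Fin 2))}
    {u : Fin n → EuclideanSpace ℝ (Fin 2) → ℝ} (hu : InLambda2 Ω u)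
    {i0 i1 : Fin n} (hne : i0 ≠ i1) (hDm : MeasurableSet D) (hDΩ : D ⊆ Ω) {d s : ℝ}
    (hval : ∀ᵐ x ∂(volume.restrict D), u i0 x ∈ Set.Ioo d (1 - d) ∧ u i1 x ∈ Set.Ioo d (1 - d))
    (hs : s ∈ Set.Ioo (-d) d) :
    InLambda2 Ω (fun i x => u i x + s * exchangeCoeff i0 i1 i * D.indicator 1 x) := by
  refine ⟨fun i => (hu.1 i).add (measurable_const.mul (measurable_one.indicator hDm)), ?_, ?_⟩
  · intro i x hx
    have hxD : x ∉ D := fun h => hx (hDΩ h)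
    simp [hu.2.1 i x hx, hxD]
  · have hval' := ae_restrict_of_ae ((ae_restrict_iff' hDm).1 hval) (s := Ω)
    filter_upwards [hu.2.2, hval'] with x hx hv
    refine ⟨fun i => ?_, ?_⟩
    · by_cases hxD : x ∈ D
      · obtain ⟨⟨h1, h2⟩, h3, h4⟩ := hv hxD
        obtain ⟨h5, h6⟩ := hs
        simp only [exchangeCoeff, Set.indicator_of_mem hxD, Pi.one_apply]
        split_ifs with ha hb hb
        · exact absurd (ha.symm.trans hb) hne
        · subst ha
          constructor <;> linarith
        · subst hb
          constructor <;> linarith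
        · simpa using hx.1 i
      · simpa [hxD] using hx.1 i
    · have h0 : ∑ j, exchangeCoeff i0 i1 j = 0 := by simp [exchangeCoeff]
      rw [Finset.sum_add_distrib, hx.2, ← Finset.sum_mul, ← Finset.mul_sum, h0]
      simp

/-- **Strict concavity along exchange directions.**
If `û ∈ Λ₂` has components `û₁, û₂ ∈ (d, 1-d)` a.e. on a set `D ⊆ Ω` of positive
measure, then the exchange perturbations `uˢ` stay in `Λ₂` for `s ∈ (-d, d)`, the
function `s ↦ E(uˢ)` is a quadratic polynomial with constant second derivative
`-4 μ √(π/τ) ∫_Ω χ_D (G_τ * χ_D) < 0`, hence strictly concave on `(-d, d)`, so `û`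
is not a minimizer of `E` over `Λ₂`. -/
theorem exchange_direction_strict_concavity {n : ℕ} (hn : 2 ≤ n)
    (Ω : Set (EuclideanSpace ℝ (Fin 2))) (hΩm : MeasurableSet Ω)
    (hΩb : Bornology.IsBounded Ω) (hΩpos : 0 < volume Ω) (hΩfin : volume Ω ≠ ⊤)
    (τ μ : ℝ) (hτ : 0 < τ) (hμ : 0 < μ)
    (lam : Fin n → ℝ) (hlam : ∀ i, 0 < lam i)
    (e : Fin n → EuclideanSpace ℝ (Fin 2) → ℝ)
    (he_meas : ∀ i, Measurable (e i))
    (he_int : ∀ i, IntegrableOn (e i) Ω)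
    (he_nonneg : ∀ i x, 0 ≤ e i x)
    (uhat : Fin n → EuclideanSpace ℝ (Fin 2) → ℝ)
    (huhat : InLambda2 Ω uhat)
    (i0 i1 : Fin n) (hi0 : (i0 : ℕ) = 0) (hi1 : (i1 : ℕ) = 1)
    (D : Set (EuclideanSpace ℝ (Fin 2))) (hDm : MeasurableSet D) (hDΩ : D ⊆ Ω)
    (hDpos : 0 < volume D)
    (d : ℝ) (hd : d ∈ Set.Ioo (0 : ℝ) (1 / 2))
    (hval : ∀ᵐ x ∂(volume.restrict D),
      uhat i0 x ∈ Set.Ioo d (1 - d) ∧ uhat i1 x ∈ Set.Ioo d (1 - d))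
    (us : ℝ → Fin n → EuclideanSpace ℝ (Fin 2) → ℝ)
    (hus : ∀ s i x, us s i x =
      if i = i0 then uhat i x + s * D.indicator 1 x
      else if i = i1 then uhat i x - s * D.indicator 1 x
      else uhat i x) :
    (∀ s ∈ Set.Ioo (-d) d, InLambda2 Ω (us s)) ∧
    (∃ a b : ℝ, ∀ s : ℝ,
      ictmEnergy Ω τ μ lam e (us s) =
        a + b * s +
          ((-(4 * μ * Real.sqrt (π / τ) *
              ∫ x in Ω, D.indicator 1 x * gconv (gauss τ) (D.indicator 1) x)) / 2)
            * s ^ 2) ∧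
    (-(4 * μ * Real.sqrt (π / τ) *
        ∫ x in Ω, D.indicator 1 x * gconv (gauss τ) (D.indicator 1) x) < 0) ∧
    StrictConcaveOn ℝ (Set.Ioo (-d) d) (fun s => ictmEnergy Ω τ μ lam e (us s)) ∧
    ¬ (∀ u, InLambda2 Ω u →
        ictmEnergy Ω τ μ lam e uhat ≤ ictmEnergy Ω τ μ lam e u) := by
  have hne : i0 ≠ i1 := by
    rintro rfl
    omega
  have hχm : Measurable (D.indicator (1 : EuclideanSpace ℝ (Fin 2) → ℝ)) :=
    measurable_one.indicator hDm
  have hDfin : volume D ≠ ⊤ := ne_top_of_le_ne_top hΩfin (measure_mono hDΩ)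
  have hχ : Integrable (D.indicator (1 : EuclideanSpace ℝ (Fin 2) → ℝ)) :=
    (integrable_indicator_iff hDm).2 (integrableOn_const (C := (1 : ℝ)) hDfin)
  have hus' : ∀ s, us s =
      fun i x => uhat i x + s * exchangeCoeff i0 i1 i * D.indicator 1 x := by
    intro s
    funext i x
    rw [hus, exchangeCoeff]
    split_ifs with ha hb hb
    · exact absurd (ha.symm.trans hb) hne
    all_goals ring
  have hmem : ∀ s ∈ Set.Ioo (-d) d, InLambda2 Ω (us s) := by
    intro s hs
    rw [hus']
    exact inLambda2_exchange huhat hne hDm hDΩ hval hs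
  have hue : ∀ i, IntegrableOn (fun x => uhat i x * e i x) Ω := by
    intro i
    refine (he_int i).bdd_mul (c := 1) (huhat.1 i).aestronglyMeasurable ?_
    filter_upwards [huhat.2.2] with x hx
    rw [Real.norm_of_nonneg (hx.1 i).1]
    exact (hx.1 i).2
  have hχe : ∀ i, IntegrableOn (fun x => D.indicator 1 x * e i x) Ω := by
    intro i
    refine (he_int i).bdd_mul (c := 1) hχm.aestronglyMeasurable (ae_of_all _ fun x => ?_)
    by_cases hx : x ∈ D <;> simp [hx]
  have hneg : -(4 * μ * Real.sqrt (π / τ) *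
      ∫ x in Ω, D.indicator 1 x * gconv (gauss τ) (D.indicator 1) x) < 0 := by
    have h1 := pairing_indicator_pos hτ hχ hDm hDΩ hDpos
    have h2 : 0 < Real.sqrt (π / τ) := Real.sqrt_pos.2 (div_pos Real.pi_pos hτ)
    exact neg_neg_of_pos (mul_pos (by positivity) h1)
  obtain ⟨a, b, hquad⟩ : ∃ a b : ℝ, ∀ s : ℝ,
      ictmEnergy Ω τ μ lam e (us s) =
        a + b * s +
          ((-(4 * μ * Real.sqrt (π / τ) *
              ∫ x in Ω, D.indicator 1 x * gconv (gauss τ) (D.indicator 1) x)) / 2)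
            * s ^ 2 := by
    obtain ⟨b, hb⟩ := ictmEnergy_expand (μ := μ) hτ lam (exchangeCoeff i0 i1) e uhat
      (D.indicator 1) (huhat.integrable hΩfin) huhat.1 hχ hχm hue hχe
    refine ⟨ictmEnergy Ω τ μ lam e uhat, b, fun s => ?_⟩
    rw [hus', hb, sum_exchangeCoeff hne]
    ring
  refine ⟨hmem, ⟨a, b, hquad⟩, hneg, ?_, fun hmin => ?_⟩
  · simp_rw [hquad]
    exact strictConcaveOn_quadratic (convex_Ioo _ _) a b (by linarith)
  · have hu0 : us 0 = uhat := by
      rw [hus']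
      simp
    obtain ⟨hd0, -⟩ := hd
    have hplus := hmin _ (hmem (d / 2) ⟨by linarith, by linarith⟩)
    have hminus := hmin _ (hmem (-(d / 2)) ⟨by linarith, by linarith⟩)
    rw [← hu0, hquad, hquad] at hplus hminus
    -- Adding the two inequalities cancels the linear term and contradicts `hneg`.
    have hd2 := mul_neg_of_neg_of_pos hneg (pow_pos hd0 2)
    linarith
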